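/- Let G be a finite solvable SST-group with nilpotent residual L, and let D be a complement of L in G (a system normalizer of G), so that G = L ⋊ D with L a normal abelian Hall subgroup and D a nilpotent Hall subgroup. Then the Frattini subgroup satisfies Φ(G) = Φ(L) × Φ(D). Furthermore, G/Φ(G) is a complemented group, i.e., every subgroup of G/Φ(G) has a complement in G/Φ(G). -/

import Mathlib

open scoped Pointwise

section Defs

variable {G : Type*} [Group G]

/-- `K` is an SS-permutable supplement of `H` in `G`: `HK = G` and `H` permutes with
every Sylow subgroup of `K`. -/
def IsSSSupplement (H K : Subgroup G) : Prop :=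
  (H : Set G) * (K : Set G) = Set.univ ∧
    ∀ (p : ℕ) [Fact p.Prime] (P : Sylow p K),
      (H : Set G) * ((P.toSubgroup.map K.subtype : Subgroup G) : Set G) =
        ((P.toSubgroup.map K.subtype : Subgroup G) : Set G) * (H : Set G)

/-- `H` is SS-permutable in `G`: `H` has a supplement `K` such that `H` permutes with
every Sylow subgroup of `K`. -/
def IsSSPermutable (H : Subgroup G) : Prop :=
  ∃ K : Subgroup G, IsSSSupplement H K

/-- `H` is NSS-permutable in `G`: `H` has a normal supplement `K` such that `H` permutes
with every Sylow subgroup of `K`. -/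
def IsNSSPermutable (H : Subgroup G) : Prop :=
  ∃ K : Subgroup G, K.Normal ∧ IsSSSupplement H K

/-- `H` is S-permutable in `G`: it permutes with every Sylow subgroup of `G`. -/
def IsSPermutable (H : Subgroup G) : Prop :=
  ∀ (p : ℕ) [Fact p.Prime] (P : Sylow p G),
    (H : Set G) * ((P : Subgroup G) : Set G) = ((P : Subgroup G) : Set G) * (H : Set G)

/-- `H` is semipermutable in `G`: `HX = XH` for every subgroup `X` with `gcd(|H|,|X|) = 1`. -/
def IsSemipermutable (H : Subgroup G) : Prop :=
  ∀ X : Subgroup G, Nat.Coprime (Nat.card H) (Nat.card X) →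
    (H : Set G) * (X : Set G) = (X : Set G) * (H : Set G)

/-- `H` is S-semipermutable in `G`: `HQ = QH` for every Sylow `q`-subgroup `Q` of `G`
with `q` a prime not dividing `|H|`. -/
def IsSSemipermutable (H : Subgroup G) : Prop :=
  ∀ (q : ℕ) [Fact q.Prime], ¬ q ∣ Nat.card H → ∀ Q : Sylow q G,
    (H : Set G) * ((Q : Subgroup G) : Set G) = ((Q : Subgroup G) : Set G) * (H : Set G)

end Defs

/-- `G` is an SST-group: SS-permutability is a transitive relation. -/
def IsSSTGroup (G : Type*) [Group G] : Prop :=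
  ∀ H K : Subgroup G, H ≤ K → IsSSPermutable (H.subgroupOf K) → IsSSPermutable K →
    IsSSPermutable H

/-- `G` is an NSST-group: NSS-permutability is a transitive relation. -/
def IsNSSTGroup (G : Type*) [Group G] : Prop :=
  ∀ H K : Subgroup G, H ≤ K → IsNSSPermutable (H.subgroupOf K) → IsNSSPermutable K →
    IsNSSPermutable H

/-- `G` is a PST-group: S-permutability is a transitive relation. -/
def IsPSTGroup (G : Type*) [Group G] : Prop :=
  ∀ H K : Subgroup G, H ≤ K → IsSPermutable (H.subgroupOf K) → IsSPermutable K →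
    IsSPermutable H

/-- `G` is a BT-group: semipermutability is a transitive relation. -/
def IsBTGroup (G : Type*) [Group G] : Prop :=
  ∀ H K : Subgroup G, H ≤ K → IsSemipermutable (H.subgroupOf K) → IsSemipermutable K →
    IsSemipermutable H

/-- `L` is the nilpotent residual of `G`: the smallest normal subgroup of `G`
with nilpotent quotient. -/
def IsNilpotentResidual {G : Type*} [Group G] (L : Subgroup G) : Prop :=
  L.Normal ∧ ∀ [L.Normal], Group.IsNilpotent (G ⧸ L) ∧
    ∀ (N : Subgroup G) [N.Normal], Group.IsNilpotent (G ⧸ N) → L ≤ N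

/-!
A subgroup `H` of a normal `p`-subgroup of an SST-group is SS-permutable by transitivity. Its
supplement has `p`-power index, so it contains Sylow `q`-subgroups for all `q ≠ p`, and hence every
subgroup of order prime to `p` normalizes `H`. Thus a nontrivial solvable SST-group has a nontrivial
cyclic normal subgroup, and by induction its commutator subgroup, which contains `L`, is nilpotent.

Suppose first that `L` is a `p`-group. Then a complement of the Sylow `p`-subgroup `P ≥ L` acts on
`P` by power automorphisms of order prime to `p`. If `φ ≠ 1` is one of these, it is fixed point
free, so every element of `P` has the form `a⁻¹ * φ a`. This makes `P` equal to `L` and abelian, so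
all subgroups of `L` are normal in `G`. Passing to quotients, one obtains in general that `L` is a
Hall subgroup all of whose subgroups are normal in `G`.

A proper subgroup of `G` never supplements a subgroup of `Φ(D)`. Hence the primary subgroups of
`Φ(D)` are S-permutable, lie in all Sylow subgroups for their prime, and so centralize `L`. This
makes `Φ(D)` normal in `G`, and `Φ(G) = Φ(L) Φ(D)` follows. Finally, `G/Φ(G)` is the semidirect
product of quotients of `L/Φ(L)` and `D/Φ(D)`, which are complemented because `L` and `D` are
nilpotent; a complement of `H` in such a product is a complement of `H ∩ L` times a complement of
`HL ∩ D`.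
-/

open Subgroup

section Subgroups

variable {G : Type*} [Group G]

theorem relIndex_eq_of_subset_mul {H K T : Subgroup G} (hHT : H ≤ T)
    (h : (T : Set G) ⊆ (H : Set G) * (K : Set G)) : K.relIndex H = K.relIndex T := by
  refine Nat.card_congr (.ofBijective (quotientSubgroupOfEmbeddingOfLE K hHT)
    ⟨(quotientSubgroupOfEmbeddingOfLE K hHT).injective, fun y => ?_⟩)
  obtain ⟨⟨t, ht⟩, rfl⟩ := QuotientGroup.mk_surjective y
  obtain ⟨a, ha, k, hk, rfl⟩ := h ht
  refine ⟨QuotientGroup.mk ⟨a, ha⟩, QuotientGroup.eq.mpr ?_⟩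
  simpa [mem_subgroupOf] using hk

theorem index_dvd_card_of_mul_eq_univ {H K : Subgroup G}
    (h : (H : Set G) * (K : Set G) = Set.univ) : K.index ∣ Nat.card H := by
  rw [← relIndex_top_right, ← relIndex_eq_of_subset_mul le_top (h ▸ Set.subset_univ _)]
  exact relIndex_dvd_card _ _

theorem coe_sup_of_mul_comm {H K : Subgroup G}
    (h : (H : Set G) * (K : Set G) = (K : Set G) * (H : Set G)) :
    ((H ⊔ K : Subgroup G) : Set G) = (H : Set G) * (K : Set G) := by
  refine Set.Subset.antisymm (fun x hx => ?_) (sup_eq_closure_mul H K ▸ subset_closure)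
  rw [sup_eq_closure_mul] at hx
  induction hx using closure_induction with
  | mem _ hx => exact hx
  | one => exact ⟨1, H.one_mem, 1, K.one_mem, one_mul 1⟩
  | mul x y _ _ hx hy =>
    have : (H : Set G) * K * (H * K) = H * K := by
      rw [mul_assoc, ← mul_assoc (K : Set G), ← h, mul_assoc (H : Set G), coe_mul_coe, ← mul_assoc,
        coe_mul_coe]
    exact this ▸ Set.mul_mem_mul hx hy
  | inv x _ hx =>
    rw [h]
    simpa [mul_inv_rev] using Set.inv_mem_inv.mpr hx

theorem le_of_coprime_card_index {H N : Subgroup G} [N.Normal]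
    (h : (Nat.card H).Coprime N.index) : H ≤ N :=
  relIndex_eq_one.mp (Nat.eq_one_of_dvd_coprimes h (relIndex_dvd_card N H)
    (relIndex_dvd_index_of_normal N H))

theorem characteristic_of_coprime_card_index {N : Subgroup G} [N.Normal]
    (h : (Nat.card N).Coprime N.index) : N.Characteristic :=
  characteristic_iff_map_le.mpr fun φ => le_of_coprime_card_index <| by
    rwa [card_map_of_injective φ.injective]

theorem normal_of_isComplement'_of_le_centralizer {H K : Subgroup G} (hHK : H.IsComplement' K)
    (hcent : H ≤ centralizer (K : Set G)) : K.Normal :=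
  normalizer_eq_top_iff.mp <| top_le_iff.mp <| hHK.sup_eq_top ▸
    sup_le (hcent.trans (centralizer_le_normalizer _)) le_normalizer

theorem le_normalizer_of_mul_comm {P H Q : Subgroup G} [P.Normal] (hHP : H ≤ P)
    (hPQ : Disjoint P Q) (h : (H : Set G) * (Q : Set G) = (Q : Set G) * (H : Set G)) :
    Q ≤ normalizer (H : Set G) := by
  rw [le_normalizer_iff]
  intro q hq a ha
  obtain ⟨b, hb, r, hr, hbr : b * r = q * a⟩ := h ▸ Set.mul_mem_mul hq ha
  have hrq : r * q⁻¹ = b⁻¹ * (q * a * q⁻¹) := by rw [← hbr]; group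
  have hmem : r * q⁻¹ ∈ P :=
    hrq ▸ P.mul_mem (P.inv_mem (hHP hb)) (Normal.conj_mem ‹_› a (hHP ha) q)
  have hr : r * q⁻¹ = 1 := disjoint_def.mp hPQ hmem (Q.mul_mem hr (Q.inv_mem hq))
  rw [hr, eq_comm, inv_mul_eq_one] at hrq
  exact hrq ▸ hb

theorem prime_dvd_card_of_isPGroup_of_le {p : ℕ} [Fact p.Prime] {Q T : Subgroup G}
    (hQ : IsPGroup p Q) (hne : Q ≠ ⊥) (hQT : Q ≤ T) : p ∣ Nat.card T :=
  (hQ.card_eq_or_dvd.resolve_left (mt card_eq_one.mp hne)).trans (card_dvd_of_le hQT)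

variable [Finite G]

theorem eq_top_of_forall_exists_sylow_le {T : Subgroup G}
    (h : ∀ (p : ℕ) [Fact p.Prime], ∃ S : Sylow p G, (S : Subgroup G) ≤ T) : T = ⊤ := by
  by_contra hT
  obtain ⟨p, hp, hdvd⟩ := Nat.exists_prime_and_dvd (mt index_eq_one.mp hT)
  have := Fact.mk hp
  obtain ⟨S, hS⟩ := h p
  exact S.not_dvd_index (hdvd.trans (index_dvd_of_le hS))

theorem le_of_forall_isPGroup_le {T U : Subgroup G}
    (h : ∀ (p : ℕ) [Fact p.Prime] (Q : Subgroup G), Q ≤ T → IsPGroup p Q → Q ≤ U) : T ≤ U := by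
  refine subgroupOf_eq_top.mp (eq_top_of_forall_exists_sylow_le fun p _ => ?_)
  let S : Sylow p T := default
  exact ⟨S, map_le_iff_le_comap.mp (h p _ (map_subtype_le _) (S.2.map _))⟩

theorem exists_conj_smul_sylow_le_of_mul_eq_univ {p : ℕ} [Fact p.Prime] {H K : Subgroup G}
    (hHK : (H : Set G) * (K : Set G) = Set.univ) (hK : ¬ p ∣ K.index) (R : Sylow p G) :
    ∃ a ∈ H, ((a • R : Sylow p G) : Subgroup G) ≤ K := by
  let Q : Sylow p K := default
  have hQ : ¬ p ∣ (Q.map K.subtype).index := by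
    rw [index_map_subtype, (Fact.out : p.Prime).dvd_mul]
    exact not_or.mpr ⟨Q.not_dvd_index, hK⟩
  let S : Sylow p G := (Q.2.map K.subtype).toSylow hQ
  have hS : (S : Subgroup G) ≤ K := map_subtype_le _
  obtain ⟨g, rfl⟩ := MulAction.exists_smul_eq G S R
  obtain ⟨a, ha, c, hc, rfl⟩ := hHK ▸ Set.mem_univ g
  refine ⟨a⁻¹, H.inv_mem ha, ?_⟩
  rw [smul_smul, inv_mul_cancel_left]
  exact Sylow.smul_le hS ⟨c, hc⟩

theorem isPGroup_le_sylow_of_mul_comm {p : ℕ} [Fact p.Prime] {H : Subgroup G}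
    (hH : IsPGroup p H) (Q : Sylow p G)
    (h : (H : Set G) * ((Q : Subgroup G) : Set G) = ((Q : Subgroup G) : Set G) * (H : Set G)) :
    H ≤ Q := by
  have hrel : (Q : Subgroup G).relIndex (H ⊔ Q) ∣ Nat.card H := by
    rw [← relIndex_eq_of_subset_mul le_sup_left (coe_sup_of_mul_comm h).le]
    exact relIndex_dvd_card _ _
  obtain ⟨n, hn⟩ := IsPGroup.iff_card.mp hH
  have hcop : (Nat.card H).Coprime (Q : Subgroup G).index := by
    rw [hn]
    exact ((Fact.out : p.Prime).coprime_iff_not_dvd.mpr Q.not_dvd_index).pow_left n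
  refine le_sup_left.trans (relIndex_eq_one.mp (Nat.eq_one_of_dvd_coprimes hcop hrel ?_))
  exact relIndex_dvd_index_of_le le_sup_right

section Nilpotent

variable [Group.IsNilpotent G]

theorem le_centralizer_of_coprime_card {H K : Subgroup G}
    (h : (Nat.card H).Coprime (Nat.card K)) : H ≤ centralizer (K : Set G) := by
  refine le_of_forall_isPGroup_le fun p _ P hPH hP => le_centralizer_iff.mp ?_
  refine le_of_forall_isPGroup_le fun q _ Q hQK hQ => le_centralizer_iff.mp ?_
  rcases eq_or_ne P ⊥ with rfl | hP1
  · exact bot_le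
  rcases eq_or_ne Q ⊥ with rfl | hQ1
  · exact le_centralizer_iff.mp bot_le
  have hpq : p ≠ q := by
    rintro rfl
    exact Nat.not_coprime_of_dvd_of_dvd (Fact.out : p.Prime).one_lt
      (prime_dvd_card_of_isPGroup_of_le hP hP1 hPH) (prime_dvd_card_of_isPGroup_of_le hQ hQ1 hQK) h
  obtain ⟨S, hS⟩ := hP.exists_le_sylow
  obtain ⟨T, hT⟩ := hQ.exists_le_sylow
  exact fun x hx => mem_centralizer_iff.mpr fun y hy =>
    (commute_of_normal_of_disjoint (S : Subgroup G) T inferInstance inferInstance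
      (IsPGroup.disjoint_of_ne p q hpq _ _ S.2 T.2) x y (hS hx) (hT hy)).eq.symm

theorem exists_characteristic_isComplement'_sylow {p : ℕ} [Fact p.Prime] (S : Sylow p G) :
    ∃ N : Subgroup G, N.Characteristic ∧ (S : Subgroup G).IsComplement' N := by
  obtain ⟨N, hN⟩ := exists_right_complement'_of_coprime S.card_coprime_index
  have hcop : (Nat.card S).Coprime (Nat.card N) := hN.symm.index_eq_card ▸ S.card_coprime_index
  have : N.Normal := normal_of_isComplement'_of_le_centralizer hN
    (le_centralizer_of_coprime_card hcop)
  exact ⟨N, characteristic_of_coprime_card_index (hN.index_eq_card ▸ hcop.symm), hN⟩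

end Nilpotent

theorem exists_normal_isPGroup_sup_eq {A H : Subgroup G} [A.Normal] [Group.IsNilpotent A] {p : ℕ}
    [Fact p.Prime] (hH : IsPGroup p H) (hHA : H ≤ A) :
    ∃ S N : Subgroup G, S.Normal ∧ N.Normal ∧ H ≤ S ∧ S ⊔ N = A ∧ Disjoint S N ∧ IsPGroup p S ∧
      ¬ p ∣ Nat.card N := by
  obtain ⟨S, hHS⟩ := (hH.comap_of_injective A.subtype A.subtype_injective).exists_le_sylow
  have : S.toSubgroup.Characteristic := S.characteristic_of_normal inferInstance
  obtain ⟨N, _, hSN⟩ := exists_characteristic_isComplement'_sylow S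
  refine ⟨S.toSubgroup.map A.subtype, N.map A.subtype, inferInstance, inferInstance, ?_, ?_, ?_,
    S.2.map _, ?_⟩
  · rw [← map_subgroupOf_eq_of_le hHA]
    exact map_mono hHS
  · rw [← Subgroup.map_sup, hSN.sup_eq_top, ← MonoidHom.range_eq_map, range_subtype]
  · exact disjoint_map A.subtype_injective hSN.disjoint
  · rw [card_map_of_injective A.subtype_injective, ← hSN.symm.index_eq_card]
    exact S.not_dvd_index

end Subgroups

section SSPermutable

theorem preimage_mul_image {G G' : Type*} [Group G] [Group G'] (f : G →* G') (A : Set G')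
    (S : Set G) : f ⁻¹' (A * f '' S) = f ⁻¹' A * S := by
  ext x
  constructor
  · rintro ⟨a, ha, _, ⟨s, hs, rfl⟩, hx : a * f s = f x⟩
    exact ⟨x * s⁻¹, by simpa [← hx] using ha, s, hs, by simp⟩
  · rintro ⟨a, ha, s, hs, rfl⟩
    exact ⟨f a, ha, f s, ⟨s, hs, rfl⟩, (map_mul f a s).symm⟩

theorem preimage_image_mul {G G' : Type*} [Group G] [Group G'] (f : G →* G') (A : Set G')
    (S : Set G) : f ⁻¹' (f '' S * A) = S * f ⁻¹' A := by
  ext x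
  constructor
  · rintro ⟨_, ⟨s, hs, rfl⟩, a, ha, hx : f s * a = f x⟩
    exact ⟨s, hs, s⁻¹ * x, by simpa [← hx] using ha, by simp⟩
  · rintro ⟨s, hs, a, ha, rfl⟩
    exact ⟨f s, ⟨s, hs, rfl⟩, f a, ha, (map_mul f s a).symm⟩

variable {G G' : Type*} [Group G] [Group G']

theorem IsSSPermutable.of_isComplement' {L D : Subgroup G} (hD : L.IsComplement' D)
    (hLn : ∀ H ≤ L, H.Normal) : IsSSPermutable D :=
  ⟨L, hD.symm.mul_eq, fun _ _ P =>
    have := hLn (P.toSubgroup.map L.subtype) (map_subtype_le _)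
    set_mul_normal_comm _ _⟩

variable [Finite G]

theorem isSSSupplement_top_iff {H : Subgroup G} : IsSSSupplement H ⊤ ↔ IsSPermutable H := by
  constructor
  · intro ⟨_, hH⟩ p _ P
    simpa only [Sylow.coe_subtype, subgroupOf_map_subtype, inf_top_eq] using
      hH p (P.subtype le_top)
  · refine fun hH => ⟨by rw [coe_top, Set.mul_univ ⟨1, H.one_mem⟩], fun p _ P => ?_⟩
    exact hH p (P.mapSurjective (f := (⊤ : Subgroup G).subtype) fun x => ⟨⟨x, mem_top x⟩, rfl⟩)

namespace IsSSPermutable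

theorem of_isSPermutable {H : Subgroup G} (hH : IsSPermutable H) : IsSSPermutable H :=
  ⟨⊤, isSSSupplement_top_iff.mpr hH⟩

theorem of_normal (N : Subgroup G) [N.Normal] : IsSSPermutable N :=
  of_isSPermutable fun _ _ _ => (set_mul_normal_comm _ N).symm

theorem of_isNilpotent [Group.IsNilpotent G] (H : Subgroup G) : IsSSPermutable H :=
  of_isSPermutable fun _ _ _ => set_mul_normal_comm _ _

theorem map {f : G →* G'} (hf : Function.Surjective f) {H : Subgroup G}
    (hH : IsSSPermutable H) : IsSSPermutable (H.map f) := by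
  obtain ⟨K, hK, hP⟩ := hH
  refine ⟨K.map f, ?_, fun p _ P => ?_⟩
  · rw [coe_map, coe_map, ← Set.image_mul, hK, Set.image_univ, hf.range_eq]
  · obtain ⟨Q, rfl⟩ := Sylow.mapSurjective_surjective (f.subgroupMap_surjective K) p P
    have hQ : (Q.mapSurjective (f.subgroupMap_surjective K)).toSubgroup.map (K.map f).subtype =
        (Q.toSubgroup.map K.subtype).map f := by
      rw [Sylow.coe_mapSurjective, map_map, map_map]
      rfl
    rw [hQ, coe_map, coe_map f, ← Set.image_mul, ← Set.image_mul, hP p Q]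

theorem comap {f : G →* G'} (hf : Function.Surjective f) {H : Subgroup G'}
    (hH : IsSSPermutable H) : IsSSPermutable (H.comap f) := by
  obtain ⟨K, hK, hP⟩ := hH
  refine ⟨K.comap f, ?_, fun p _ P => ?_⟩
  · rw [coe_comap, coe_comap, ← preimage_mul_image, Set.image_preimage_eq _ hf, hK,
      Set.preimage_univ]
  · have hfK : Function.Surjective (f.subgroupComap K) :=
      f.subgroupComap_surjective_of_surjective K hf
    have hQ : (P.mapSurjective hfK).toSubgroup.map K.subtype =
        (P.toSubgroup.map (K.comap f).subtype).map f := by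
      rw [Sylow.coe_mapSurjective, map_map, map_map]
      rfl
    have hPK := hP p (P.mapSurjective hfK)
    rw [hQ, coe_map f] at hPK
    rw [coe_comap, ← preimage_mul_image, ← preimage_image_mul, hPK]

end IsSSPermutable

namespace IsSSTGroup

theorem of_surjective (hG : IsSSTGroup G) {f : G →* G'} (hf : Function.Surjective f) :
    IsSSTGroup G' := fun H K hHK hH hK => by
  have h := hG (H.comap f) (K.comap f) (comap_mono hHK)
    (hH.comap (f.subgroupComap_surjective_of_surjective K hf)) (hK.comap hf)
  simpa only [map_comap_eq_self_of_surjective hf] using h.map hf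

/-- A supplement of `H` has `p`-power index, so it contains an `H`-conjugate of `R`. -/
theorem le_normalizer_of_isPGroup (hG : IsSSTGroup G) {p q : ℕ} [Fact p.Prime] [Fact q.Prime]
    (hpq : p ≠ q) {P H R : Subgroup G} [P.Normal] (hP : IsPGroup p P) (hHP : H ≤ P)
    (hR : IsPGroup q R) : R ≤ normalizer (H : Set G) := by
  have : Group.IsNilpotent P := hP.isNilpotent
  obtain ⟨K, hHK, hperm⟩ := hG H P hHP (.of_isNilpotent _) (.of_normal P)
  obtain ⟨n, hn⟩ := IsPGroup.iff_card.mp (hP.to_le hHP)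
  have hqK : ¬ q ∣ K.index := fun h => hpq <| Eq.symm <|
    (Nat.prime_dvd_prime_iff_eq Fact.out Fact.out).mp <|
      (Fact.out : q.Prime).dvd_of_dvd_pow (hn ▸ h.trans (index_dvd_card_of_mul_eq_univ hHK))
  obtain ⟨S, hRS⟩ := hR.exists_le_sylow
  obtain ⟨a, ha, haS⟩ := exists_conj_smul_sylow_le_of_mul_eq_univ hHK hqK S
  have hnorm : ((a • S : Sylow q G) : Subgroup G) ≤ normalizer (H : Set G) := by
    refine le_normalizer_of_mul_comm hHP
      (IsPGroup.disjoint_of_ne p q hpq _ _ hP (a • S : Sylow q G).2) ?_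
    simpa only [Sylow.coe_subtype, subgroupOf_map_subtype, inf_of_le_left haS] using
      hperm q ((a • S).subtype haS)
  rw [Sylow.coe_subgroup_smul, pointwise_smul_subset_iff, ← map_inv,
    conj_smul_eq_self_of_mem (inv_mem (le_normalizer ha))] at hnorm
  exact hRS.trans hnorm

end IsSSTGroup

end SSPermutable

section PowerAutomorphisms

theorem conjNormal_eq_one_iff {G : Type*} [Group G] {N : Subgroup G} [N.Normal] {x : G} :
    MulAut.conjNormal (H := N) x = 1 ↔ x ∈ centralizer (N : Set G) := by
  simp only [MulEquiv.ext_iff, Subtype.ext_iff, MulAut.conjNormal_apply, MulAut.one_apply,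
    mul_inv_eq_iff_eq_mul, Subtype.forall, mem_centralizer_iff, SetLike.mem_coe]
  exact forall₂_congr fun _ _ => eq_comm

/-- The group of power automorphisms of `P`: those mapping every subgroup of `P` onto itself. It is
encoded as the kernel of the action of `MulAut P` on subgroups, which makes it normal. -/
def powerAut (P : Type*) [Group P] : Subgroup (MulAut P) :=
  (MulAction.toPermHom (MulAut P) (Subgroup P)).ker

instance powerAut.normal (P : Type*) [Group P] : (powerAut P).Normal :=
  inferInstanceAs (MulAction.toPermHom (MulAut P) (Subgroup P)).ker.Normal

theorem conjNormal_mem_powerAut {G : Type*} [Group G] {P : Subgroup G} [P.Normal] {x : G}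
    (hx : ∀ H ≤ P, x ∈ normalizer (H : Set G)) : MulAut.conjNormal x ∈ powerAut P := by
  refine Equiv.ext fun H => Subgroup.ext fun y => ?_
  have hy := mem_normalizer_iff''.mp (hx (H.map P.subtype) (map_subtype_le H)) y
  have hxy : x⁻¹ * y * x = ((MulAut.conjNormal (H := P) x)⁻¹ • y : P) := by
    rw [MulAut.smul_def, MulAut.conjNormal_inv_apply]
  simp only [hxy, mem_map, Subgroup.coe_subtype, SetLike.coe_eq_coe, exists_eq_right] at hy
  exact mem_pointwise_smul_iff_inv_smul_mem.trans hy.symm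

namespace powerAut

variable {P : Type*} [Group P] {φ ψ : MulAut P}

theorem exists_zpow_eq (hφ : φ ∈ powerAut P) (g : P) : ∃ i : ℤ, g ^ i = φ g := by
  have h : φ • zpowers g = zpowers g := DFunLike.congr_fun hφ (zpowers g)
  exact mem_zpowers_iff.mp (h ▸ smul_mem_pointwise_smul g φ _ (mem_zpowers g))

theorem commute (hφ : φ ∈ powerAut P) (hψ : ψ ∈ powerAut P) : Commute φ ψ := by
  refine MulEquiv.ext fun g => ?_
  obtain ⟨i, hi⟩ := exists_zpow_eq hφ g
  obtain ⟨j, hj⟩ := exists_zpow_eq hψ g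
  rw [MulAut.mul_apply, MulAut.mul_apply, ← hi, ← hj, map_zpow, map_zpow, ← hi, ← hj,
    zpow_comm]

variable {p : ℕ}

theorem apply_eq_self_of_dvd_sub_one (hP : IsPGroup p P) (hcop : p.Coprime (orderOf φ)) {g : P}
    {i : ℤ} (hi : (p : ℤ) ∣ i - 1) (h : g ^ i = φ g) : φ g = g := by
  obtain ⟨b, hb⟩ := hP g
  have hiter (n : ℕ) : (φ ^ n) g = g ^ i ^ n := by
    induction n with
    | zero => simp
    | succ n ih => rw [pow_succ', MulAut.mul_apply, ih, map_zpow, ← h, ← zpow_mul, pow_succ']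
  obtain ⟨c, hc⟩ : ((p ^ b : ℕ) : ℤ) ∣ i ^ p ^ b - 1 := by
    have := dvd_sub_pow_of_dvd_sub (R := ℤ) (b := 1) hi b
    rw [one_pow] at this
    exact_mod_cast (pow_dvd_pow (p : ℤ) b.le_succ).trans this
  have hfix : φ ^ p ^ b ∈ MulAction.stabilizer (MulAut P) g := by
    change (φ ^ p ^ b) g = g
    rw [hiter, eq_add_of_sub_eq hc, zpow_add, zpow_mul, zpow_natCast, hb, one_zpow, one_mul,
      zpow_one]
  obtain ⟨m, hm⟩ := exists_pow_eq_self_of_coprime (hcop.pow_left b)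
  exact hm ▸ pow_mem hfix m

variable [Fact p.Prime]

theorem apply_eq_self_of_apply_zpow_eq_self (hP : IsPGroup p P) (hφ : φ ∈ powerAut P)
    (hcop : p.Coprime (orderOf φ)) {g : P} {m : ℤ} (hm : g ^ m ≠ 1) (h : φ (g ^ m) = g ^ m) :
    φ g = g := by
  obtain ⟨i, hi⟩ := exists_zpow_eq hφ g
  refine apply_eq_self_of_dvd_sub_one hP hcop ?_ hi
  refine (Int.natCast_dvd_natCast.mpr (hP.dvd_orderOf hm)).trans ?_
  rw [orderOf_dvd_iff_zpow_eq_one, zpow_sub_one, ← zpow_mul, mul_comm, zpow_mul, hi, ← map_zpow, h,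
    mul_inv_cancel]

theorem apply_eq_self_of_commute (hP : IsPGroup p P) (hφ : φ ∈ powerAut P)
    (hcop : p.Coprime (orderOf φ)) {u v : P} (hu1 : u ≠ 1) (hu : φ u = u) (huv : Commute u v) :
    φ v = v := by
  obtain ⟨n, hn⟩ := exists_zpow_eq hφ v
  obtain ⟨m, hm⟩ := exists_zpow_eq hφ (u * v)
  have huvm : u ^ m * v ^ m = u * v ^ n := by rw [← huv.mul_zpow, hm, map_mul, hu, hn]
  by_cases hum : u ^ (m - 1) = 1
  · refine apply_eq_self_of_dvd_sub_one hP hcop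
      ((Int.natCast_dvd_natCast.mpr (hP.dvd_orderOf hu1)).trans
        (orderOf_dvd_iff_zpow_eq_one.mpr hum)) ?_
    rw [zpow_sub_one, mul_inv_eq_one] at hum
    rw [← hn]
    exact mul_left_cancel (hum ▸ huvm)
  · have hvu : v ^ (n - m) = u ^ (m - 1) := by
      rw [zpow_sub, mul_inv_eq_iff_eq_mul, sub_eq_neg_add, zpow_add, zpow_neg_one, mul_assoc,
        huvm, inv_mul_cancel_left]
    exact apply_eq_self_of_apply_zpow_eq_self hP hφ hcop (hvu ▸ hum)
      (by rw [hvu, map_zpow, hu])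

variable [Finite P]

theorem eq_one_of_apply_eq_self (hP : IsPGroup p P) (hφ : φ ∈ powerAut P)
    (hcop : p.Coprime (orderOf φ)) {c : P} (hc1 : c ≠ 1) (hc : φ c = c) : φ = 1 := by
  have : Nontrivial P := ⟨c, 1, hc1⟩
  obtain ⟨⟨z, hz⟩, hz1⟩ := @exists_ne (center P) hP.center_nontrivial 1
  have hzv (v : P) : Commute z v := (mem_center_iff.mp hz v).symm
  have hφz : φ z = z := apply_eq_self_of_commute hP hφ hcop hc1 hc (hzv c).symm
  exact MulEquiv.ext fun v =>
    apply_eq_self_of_commute hP hφ hcop (fun h => hz1 (Subtype.ext h)) hφz (hzv v)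

theorem exists_inv_mul_apply_eq (hP : IsPGroup p P) (hφ : φ ∈ powerAut P)
    (hcop : p.Coprime (orderOf φ)) (hφ1 : φ ≠ 1) (h : P) : ∃ a, a⁻¹ * φ a = h := by
  refine Finite.surjective_of_injective (f := fun a => a⁻¹ * φ a) (fun a b hab => ?_) h
  have hfix : φ (a * b⁻¹) = a * b⁻¹ := by
    have hab : a⁻¹ * φ a = b⁻¹ * φ b := hab
    rw [map_mul, map_inv, inv_mul_eq_iff_eq_mul.mp hab]
    group
  by_contra hne
  exact hφ1 (eq_one_of_apply_eq_self hP hφ hcop (mt mul_inv_eq_one.mp hne) hfix)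

/-- Every `h` has the form `a⁻¹ * φ a`, so conjugation by `h` is the commutator of `(conj a)⁻¹` and
`φ`. It therefore lies in the normal subgroup `powerAut P`, and then, as `powerAut P` is abelian,
this commutator is trivial. -/
theorem commute_of_ne_one (hP : IsPGroup p P) (hφ : φ ∈ powerAut P)
    (hcop : p.Coprime (orderOf φ)) (hφ1 : φ ≠ 1) (g h : P) : Commute g h := by
  have hconj (a : P) :
      MulAut.conj (a⁻¹ * φ a) = (MulAut.conj a)⁻¹ * φ * MulAut.conj a * φ⁻¹ := by
    ext
    simp
  have hmem (a : P) : MulAut.conj a ∈ powerAut P := by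
    obtain ⟨b, rfl⟩ := exists_inv_mul_apply_eq hP hφ hcop hφ1 a
    rw [hconj]
    exact mul_mem ((normal P).conj_mem' φ hφ _) (inv_mem hφ)
  obtain ⟨a, rfl⟩ := exists_inv_mul_apply_eq hP hφ hcop hφ1 h
  have hone : MulAut.conj (a⁻¹ * φ a) = 1 := by
    rw [hconj, mul_assoc _ φ, (commute hφ (hmem a)).eq, inv_mul_cancel_left, mul_inv_cancel]
  exact (mul_inv_eq_iff_eq_mul.mp (DFunLike.congr_fun hone g)).symm

end powerAut

end PowerAutomorphisms

section NilpotentResidual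

theorem exists_ne_bot_normal_isMulCommutative (G : Type*) [Group G] [Finite G] [Group.IsSolvable G]
    [Nontrivial G] : ∃ A : Subgroup G, A ≠ ⊥ ∧ A.Normal ∧ IsMulCommutative A := by
  obtain ⟨A, hA⟩ := (Set.toFinite {A : Subgroup G | A ≠ ⊥ ∧ A.Normal}).exists_minimal
    ⟨⊤, top_ne_bot, inferInstance⟩
  have : A.Normal := hA.prop.2
  refine ⟨A, hA.prop.1, this, ?_⟩
  have hlt := Group.IsSolvable.commutator_lt_of_ne_bot hA.prop.1
  have hbot : ⁅A, A⁆ = ⊥ := by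
    by_contra hne
    exact hA.not_lt ⟨hne, inferInstance⟩ hlt
  rw [commutator_eq_bot_iff_le_centralizer] at hbot
  exact ⟨⟨fun a b => Subtype.ext (mem_centralizer_iff.mp (hbot b.2) a a.2)⟩⟩

theorem exists_ne_bot_normal_isPGroup (G : Type*) [Group G] [Finite G] [Group.IsSolvable G]
    [Nontrivial G] :
    ∃ (p : ℕ) (P : Subgroup G), p.Prime ∧ P ≠ ⊥ ∧ P.Normal ∧ IsPGroup p P := by
  obtain ⟨A, hne, _, hcomm⟩ := exists_ne_bot_normal_isMulCommutative G
  obtain ⟨p, hp, hdvd⟩ := Nat.exists_prime_and_dvd (mt card_eq_one.mp hne)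
  have := Fact.mk hp
  let S : Sylow p A := default
  have : S.toSubgroup.Characteristic := S.characteristic_of_normal inferInstance
  refine ⟨p, S.toSubgroup.map A.subtype, hp, ?_, inferInstance, S.2.map _⟩
  rw [ne_eq, map_eq_bot_iff_of_injective _ A.subtype_injective]
  exact S.ne_bot_of_dvd_card hdvd

theorem exists_ne_one_mem_le_centralizer {G : Type*} [Group G] [Finite G] {p : ℕ} [Fact p.Prime]
    {P S : Subgroup G} [P.Normal] (hP : IsPGroup p P) (hne : P ≠ ⊥) (hS : IsPGroup p S) :
    ∃ z ∈ P, z ≠ 1 ∧ S ≤ centralizer {z} := by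
  let : MulAction S P := .compHom P ((MulAut.conjNormal (H := P)).comp S.subtype)
  have hsmul (s : S) (a : P) : ((s • a : P) : G) = s * a * (s : G)⁻¹ :=
    MulAut.conjNormal_apply _ _
  obtain ⟨z, hz, hz1⟩ := hS.exists_fixed_point_of_prime_dvd_card_of_fixed_point P
    (prime_dvd_card_of_isPGroup_of_le hP hne le_rfl) (a := 1) fun s => Subtype.ext (by simp [hsmul])
  refine ⟨z, z.2, fun h => hz1 (Subtype.ext h.symm), fun s hs => ?_⟩
  rw [mem_centralizer_singleton_iff, ← mul_inv_eq_iff_eq_mul, ← hsmul ⟨s, hs⟩ z, hz ⟨s, hs⟩]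

theorem commutator_le_centralizer_of_isCyclic {G : Type*} [Group G] (N : Subgroup G) [N.Normal]
    [IsCyclic N] : commutator G ≤ centralizer (N : Set G) := by
  let _ := (IsCyclic.mulAutMulEquiv N).toMonoidHom.commGroupOfInjective
    (IsCyclic.mulAutMulEquiv N).injective
  exact fun x hx => conjNormal_eq_one_iff.mp
    (Abelianization.commutator_subset_ker (MulAut.conjNormal : G →* MulAut N) hx)

theorem isNilpotent_of_map_mk'_of_le_centralizer {G : Type*} [Group G] {H N : Subgroup G}
    [N.Normal] (hH : Group.IsNilpotent (H.map (QuotientGroup.mk' N)))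
    (hN : H ≤ centralizer (N : Set G)) : Group.IsNilpotent H := by
  refine Subgroup.isNilpotent_of_ker_le_center ((QuotientGroup.mk' N).subgroupMap H) fun x hx => ?_
  have hxN : (x : G) ∈ N := (QuotientGroup.eq_one_iff _).mp (congrArg Subtype.val hx)
  exact mem_center_iff.mpr fun y => Subtype.ext (mem_centralizer_iff.mp (hN y.2) x hxN).symm

theorem commutator_le_of_coprime_card {G : Type*} [Group G] [Finite G] {L H K : Subgroup G}
    [L.Normal] [Group.IsNilpotent (G ⧸ L)] (h : (Nat.card H).Coprime (Nat.card K)) :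
    ⁅H, K⁆ ≤ L := by
  rw [← QuotientGroup.ker_mk' L, ← Subgroup.map_eq_bot_iff, map_commutator,
    commutator_eq_bot_iff_le_centralizer]
  exact le_centralizer_of_coprime_card
    ((h.coprime_dvd_left (card_map_dvd _ _)).coprime_dvd_right (card_map_dvd _ _))

theorem isPGroup_map_mk'_of_sup_eq {G : Type*} [Group G] {p : ℕ} {S N L : Subgroup G} [N.Normal]
    (hS : IsPGroup p S) (hSN : S ⊔ N = L) : IsPGroup p (L.map (QuotientGroup.mk' N)) := by
  rw [← hSN, Subgroup.map_sup, QuotientGroup.map_mk'_self, sup_bot_eq]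
  exact hS.map _

theorem sylow_normal_of_le {G : Type*} [Group G] [Finite G] {L : Subgroup G}
    [L.Normal] [Group.IsNilpotent (G ⧸ L)] {p : ℕ} [Fact p.Prime] (P : Sylow p G)
    (hLP : L ≤ P) : (P : Subgroup G).Normal := by
  rw [← comap_map_eq_self (f := QuotientGroup.mk' L) (H := (P : Subgroup G))
    (by rwa [QuotientGroup.ker_mk'])]
  have : ((P : Subgroup G).map (QuotientGroup.mk' L)).Normal :=
    inferInstanceAs (P.mapSurjective (QuotientGroup.mk'_surjective L)).Normal
  infer_instance

namespace IsNilpotentResidual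

variable {G : Type*} [Group G] {L : Subgroup G}

theorem le_ker (hL : IsNilpotentResidual L) {X : Type*} [Group X] [Group.IsNilpotent X]
    {f : G →* X} (hf : Function.Surjective f) : L ≤ f.ker := by
  have := hL.1
  exact hL.2.2 f.ker
    (Group.nilpotent_of_mulEquiv (QuotientGroup.quotientKerEquivOfSurjective f hf).symm)

theorem map_mk' (hL : IsNilpotentResidual L) (N : Subgroup G) [N.Normal] :
    IsNilpotentResidual (L.map (QuotientGroup.mk' N)) := by
  have hLn := hL.1
  have hnil := hL.2.1
  have hN := QuotientGroup.mk'_surjective N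
  refine ⟨hLn.map _ hN, fun {_} => ⟨?_, fun M _ _ => ?_⟩⟩
  · exact Group.nilpotent_of_surjective
      (QuotientGroup.map L (L.map (QuotientGroup.mk' N)) (QuotientGroup.mk' N) (le_comap_map _ _))
      (QuotientGroup.map_surjective_of_surjective _ _ _
        ((QuotientGroup.mk'_surjective _).comp hN) _)
  · have hle := hL.le_ker (f := (QuotientGroup.mk' M).comp (QuotientGroup.mk' N))
      ((QuotientGroup.mk'_surjective _).comp hN)
    rwa [← MonoidHom.comap_ker, QuotientGroup.ker_mk', ← map_le_iff_le_comap] at hle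

theorem not_le_centralizer_of_isComplement' (hL : IsNilpotentResidual L) {P K : Subgroup G}
    [Group.IsNilpotent P] (hPK : P.IsComplement' K) (hLP : L ≤ P) (hne : L ≠ ⊥) :
    ¬ P ≤ centralizer (K : Set G) := by
  intro hcent
  have := normal_of_isComplement'_of_le_centralizer hPK hcent
  have hLK : L ≤ K := by
    have := hL.1
    exact hL.2.2 K (Group.nilpotent_of_mulEquiv hPK.QuotientMulEquiv.symm)
  exact hne (le_bot_iff.mp (hPK.disjoint hLP hLK))

theorem le_commutator (hL : IsNilpotentResidual L) : L ≤ commutator G :=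
  Abelianization.ker_of G ▸ hL.le_ker (f := Abelianization.of) (QuotientGroup.mk'_surjective _)

end IsNilpotentResidual

namespace IsSSTGroup

variable {G : Type*} [Group G] [Finite G]

theorem le_normalizer_of_coprime_card (hG : IsSSTGroup G) {p : ℕ} [Fact p.Prime]
    {P H K : Subgroup G} [P.Normal] (hP : IsPGroup p P) (hHP : H ≤ P)
    (hK : p.Coprime (Nat.card K)) : K ≤ normalizer (H : Set G) := by
  refine le_of_forall_isPGroup_le fun q _ Q hQK hQ => ?_
  rcases eq_or_ne Q ⊥ with rfl | hne
  · exact bot_le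
  refine hG.le_normalizer_of_isPGroup ?_ hP hHP hQ
  rintro rfl
  exact (Fact.out : p.Prime).coprime_iff_not_dvd.mp hK (prime_dvd_card_of_isPGroup_of_le hQ hne hQK)

theorem exists_normal_zpowers [Group.IsSolvable G] [Nontrivial G] (hG : IsSSTGroup G) :
    ∃ z : G, z ≠ 1 ∧ (zpowers z).Normal := by
  obtain ⟨p, P, hp, hne, _, hP⟩ := exists_ne_bot_normal_isPGroup G
  have := Fact.mk hp
  let S : Sylow p G := default
  obtain ⟨z, hzP, hz1, hSz⟩ := exists_ne_one_mem_le_centralizer hP hne S.2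
  refine ⟨z, hz1, normalizer_eq_top_iff.mp (eq_top_of_forall_exists_sylow_le fun q _ => ?_)⟩
  by_cases hpq : p = q
  · subst hpq
    rw [← centralizer_closure, ← zpowers_eq_closure] at hSz
    exact ⟨S, hSz.trans (centralizer_le_normalizer _)⟩
  · exact ⟨default, hG.le_normalizer_of_isPGroup hpq hP (zpowers_le.mpr hzP) (Sylow.isPGroup' _)⟩

theorem isNilpotent_commutator [Group.IsSolvable G] (hG : IsSSTGroup G) :
    Group.IsNilpotent (commutator G) := by
  induction hn : Nat.card G using Nat.strong_induction_on generalizing G with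
  | _ n ih =>
  rcases subsingleton_or_nontrivial G with _ | _
  · infer_instance
  obtain ⟨z, hz1, _⟩ := hG.exists_normal_zpowers
  have hlt : Nat.card (G ⧸ zpowers z) < n := by
    rw [← hn, ← (zpowers z).card_mul_index, ← index_eq_card]
    refine lt_mul_of_one_lt_left (Nat.pos_of_ne_zero index_ne_zero_of_finite) ?_
    rwa [one_lt_card_iff_ne_bot, ne_eq, zpowers_eq_bot]
  have hsurj := QuotientGroup.mk'_surjective (zpowers z)
  refine isNilpotent_of_map_mk'_of_le_centralizer (N := zpowers z) ?_
    (commutator_le_centralizer_of_isCyclic _)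
  rw [commutator_def, map_commutator, map_top_of_surjective _ hsurj]
  exact ih _ hlt (hG.of_surjective hsurj) rfl

end IsSSTGroup

namespace IsNilpotentResidual

variable {G : Type*} [Group G] [Finite G] {L : Subgroup G}

theorem isNilpotent [Group.IsSolvable G] (hG : IsSSTGroup G) (hL : IsNilpotentResidual L) :
    Group.IsNilpotent L := by
  have := hG.isNilpotent_commutator
  exact Group.nilpotent_of_mulEquiv (subgroupOfEquivOfLe hL.le_commutator)

theorem eq_sylow_of_isPGroup (hG : IsSSTGroup G) (hL : IsNilpotentResidual L) {p : ℕ}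
    [Fact p.Prime] (hLp : IsPGroup p L) (hne : L ≠ ⊥) (P : Sylow p G) :
    (P : Subgroup G) = L ∧ ∀ g ∈ P, ∀ h ∈ P, Commute g h := by
  have := hL.1
  have := hL.2.1
  have hLP : L ≤ P := hLp.le_sylow_of_normal P
  have : (P : Subgroup G).Normal := sylow_normal_of_le P hLP
  have : Group.IsNilpotent P := P.2.isNilpotent
  obtain ⟨K, hPK⟩ := exists_right_complement'_of_coprime P.card_coprime_index
  have hcard : p.Coprime (Nat.card K) := by
    rw [← hPK.symm.index_eq_card]
    exact (Fact.out : p.Prime).coprime_iff_not_dvd.mpr P.not_dvd_index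
  obtain ⟨x, hxK, hx⟩ := SetLike.not_le_iff_exists.mp
    (mt le_centralizer_iff.mp (hL.not_le_centralizer_of_isComplement' hPK hLP hne))
  have hφ : MulAut.conjNormal x ∈ powerAut P := conjNormal_mem_powerAut fun H hHP =>
    hG.le_normalizer_of_coprime_card P.2 hHP hcard hxK
  have hφ1 : MulAut.conjNormal (H := (P : Subgroup G)) x ≠ 1 := mt conjNormal_eq_one_iff.mp hx
  have hcop : p.Coprime (orderOf (MulAut.conjNormal (H := (P : Subgroup G)) x)) :=
    hcard.coprime_dvd_right ((orderOf_map_dvd _ x).trans (orderOf_dvd_natCard K hxK))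
  refine ⟨le_antisymm (fun h hh => ?_) hLP, fun g hg h hh => ?_⟩
  · obtain ⟨a, ha⟩ := powerAut.exists_inv_mul_apply_eq P.2 hφ hcop hφ1 ⟨h, hh⟩
    have hPKL : ⁅(P : Subgroup G), K⁆ ≤ L :=
      commutator_le_of_coprime_card (hPK.symm.index_eq_card ▸ P.card_coprime_index)
    have hax := hPKL (commutator_mem_commutator (inv_mem a.2) hxK)
    rw [commutatorElement_def, inv_inv] at hax
    have hah : (a : G)⁻¹ * (x * a * x⁻¹) = h := by
      simpa only [coe_mul, coe_inv, MulAut.conjNormal_apply] using congrArg Subtype.val ha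
    rwa [← hah, ← mul_assoc, ← mul_assoc]
  · exact congrArg Subtype.val
      (powerAut.commute_of_ne_one P.2 hφ hcop hφ1 ⟨g, hg⟩ ⟨h, hh⟩).eq

theorem not_dvd_index_of_isPGroup (hG : IsSSTGroup G) (hL : IsNilpotentResidual L) {p : ℕ}
    [Fact p.Prime] (hLp : IsPGroup p L) (hne : L ≠ ⊥) : ¬ p ∣ L.index :=
  (hL.eq_sylow_of_isPGroup hG hLp hne default).1 ▸ Sylow.not_dvd_index _

theorem normal_of_le_of_isPGroup (hG : IsSSTGroup G) (hL : IsNilpotentResidual L) {p : ℕ}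
    [Fact p.Prime] (hLp : IsPGroup p L) {H : Subgroup G} (hHL : H ≤ L) : H.Normal := by
  rcases eq_or_ne L ⊥ with rfl | hne
  · rw [le_bot_iff.mp hHL]
    infer_instance
  have := hL.1
  let P : Sylow p G := default
  obtain ⟨hPL, hcomm⟩ := hL.eq_sylow_of_isPGroup hG hLp hne P
  refine normalizer_eq_top_iff.mp (eq_top_of_forall_exists_sylow_le fun q _ => ?_)
  by_cases hpq : p = q
  · subst hpq
    refine ⟨P, le_trans (fun g hg => ?_) (centralizer_le_normalizer _)⟩
    exact mem_centralizer_iff.mpr fun h hh => hcomm h (hPL.ge (hHL hh)) g hg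
  · exact ⟨default, hG.le_normalizer_of_isPGroup hpq hLp hHL (Sylow.isPGroup' _)⟩

variable [Group.IsSolvable G] {p : ℕ} [Fact p.Prime]

theorem not_dvd_index_of_dvd_card (hG : IsSSTGroup G) (hL : IsNilpotentResidual L)
    (hp : p ∣ Nat.card L) : ¬ p ∣ L.index := by
  have := hL.1
  have := hL.isNilpotent hG
  obtain ⟨S, N, _, _, -, hSN, -, hS, hN⟩ :=
    exists_normal_isPGroup_sup_eq (IsPGroup.of_bot (p := p)) (bot_le : ⊥ ≤ L)
  have hNL : N ≤ L := hSN ▸ le_sup_right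
  have hsurj := QuotientGroup.mk'_surjective N
  have hindex := not_dvd_index_of_isPGroup (hG.of_surjective hsurj) (hL.map_mk' N)
    (isPGroup_map_mk'_of_sup_eq hS hSN) fun h => hN ?_
  · rwa [index_map_eq _ hsurj (by rwa [QuotientGroup.ker_mk'])] at hindex
  · rw [Subgroup.map_eq_bot_iff, QuotientGroup.ker_mk'] at h
    exact le_antisymm hNL h ▸ hp

theorem normal_of_isPGroup_of_le (hG : IsSSTGroup G) (hL : IsNilpotentResidual L) {H : Subgroup G}
    (hH : IsPGroup p H) (hHL : H ≤ L) : H.Normal := by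
  have := hL.1
  have := hL.isNilpotent hG
  obtain ⟨S, N, _, _, hHS, hSN, hdisj, hS, -⟩ := exists_normal_isPGroup_sup_eq hH hHL
  have hsurj := QuotientGroup.mk'_surjective N
  have hmap : (H.map (QuotientGroup.mk' N)).Normal :=
    normal_of_le_of_isPGroup (hG.of_surjective hsurj) (hL.map_mk' N)
      (isPGroup_map_mk'_of_sup_eq hS hSN) (map_mono hHL)
  have hHN : (H ⊔ N).Normal := by
    rw [sup_comm, ← QuotientGroup.comap_map_mk' N H]
    infer_instance
  have hmod : (H ⊔ N) ⊓ S = H := SetLike.coe_injective <| by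
    rw [coe_inf, mul_normal, ← mul_inf_assoc _ _ _ hHS, hdisj.symm.eq_bot, coe_bot,
      Set.singleton_one, mul_one]
  rw [← hmod]
  infer_instance

theorem normal_of_le (hG : IsSSTGroup G) (hL : IsNilpotentResidual L) {H : Subgroup G}
    (hHL : H ≤ L) : H.Normal := by
  suffices h : H ≤ H.normalCore from le_antisymm H.normalCore_le h ▸ H.normalCore_normal
  refine le_of_forall_isPGroup_le fun p _ Q hQH hQ => ?_
  have := hL.normal_of_isPGroup_of_le hG hQ (hQH.trans hHL)
  exact normal_le_normalCore.mpr hQH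

end IsNilpotentResidual

end NilpotentResidual

section Frattini

variable {G : Type*} [Group G] {L D : Subgroup G}

theorem mem_frattini_iff {x : G} : x ∈ frattini G ↔ ∀ M : Subgroup G, IsCoatom M → x ∈ M := by
  simp [frattini, Order.radical, Subgroup.mem_iInf]

theorem normal_map_subtype_of_le_centralizer (hLD : L ⊔ D = ⊤) {N : Subgroup D} [N.Normal]
    (hN : N.map D.subtype ≤ centralizer (L : Set G)) : (N.map D.subtype).Normal := by
  have hD : D ≤ normalizer (N.map D.subtype : Set G) := by
    have := le_normalizer_map (H := N) D.subtype
    rwa [N.normalizer_eq_top, ← MonoidHom.range_eq_map, range_subtype] at this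
  exact normalizer_eq_top_iff.mp <| top_le_iff.mp <| hLD ▸
    sup_le ((le_centralizer_iff.mp hN).trans (centralizer_le_normalizer _)) hD

theorem frattini_le_sup_map_frattini_of_isComplement' [L.Normal] (hD : L.IsComplement' D) :
    frattini G ≤ L ⊔ (frattini D).map D.subtype := by
  intro x hx
  obtain ⟨l, hl, d, hd, rfl⟩ := hD.mul_eq ▸ Set.mem_univ x
  let e : G ⧸ L ≃* D := hD.symm.QuotientMulEquiv
  let f : G →* D := e.toMonoidHom.comp (QuotientGroup.mk' L)
  have hf : f (l * d) = ⟨d, hd⟩ := by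
    change e (QuotientGroup.mk' L (l * d)) = ⟨d, hd⟩
    rw [← e.eq_symm_apply, map_mul, QuotientGroup.mk'_apply, (QuotientGroup.eq_one_iff l).mpr hl]
    exact one_mul _
  have hfx : f (l * d) ∈ frattini D := frattini_le_comap_frattini_of_surjective
    (e.surjective.comp (QuotientGroup.mk'_surjective L)) hx
  exact mul_mem_sup hl ⟨⟨d, hd⟩, hf ▸ hfx, rfl⟩

variable [Finite G]

theorem eq_top_of_mul_eq_univ_of_le_map_frattini {N K : Subgroup G}
    (hN : N ≤ (frattini D).map D.subtype) (h : (N : Set G) * (K : Set G) = Set.univ) : K = ⊤ := by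
  have htop : K.subgroupOf D ⊔ frattini D = ⊤ := by
    rw [sup_comm, eq_top_iff]
    rintro ⟨d, hd⟩ -
    obtain ⟨x, hx, k, hk, rfl : x * k = d⟩ := h.ge (Set.mem_univ d)
    obtain ⟨n, hn, rfl⟩ := hN hx
    have hkD : k ∈ D := (D.mul_mem_cancel_left n.2).mp hd
    have hkK : ⟨k, hkD⟩ ∈ K.subgroupOf D := hk
    exact mul_mem_sup hn hkK
  have hDK : D ≤ K := subgroupOf_eq_top.mp (frattini_nongenerating htop)
  have hNK : N ≤ K := hN.trans ((map_subtype_le _).trans hDK)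
  rw [← coe_eq_univ, ← Set.univ_subset_iff, ← h]
  exact (Set.mul_subset_mul_right hNK).trans (coe_mul_coe K).subset

theorem le_frattini_of_le_map_frattini {N : Subgroup G} [N.Normal]
    (hN : N ≤ (frattini D).map D.subtype) : N ≤ frattini G := by
  refine fun x hx => mem_frattini_iff.mpr fun M hM => ?_
  by_contra hxM
  have htop : N ⊔ M = ⊤ := hM.2 _ (right_lt_sup.mpr fun h => hxM (h hx))
  exact hM.1 <| eq_top_of_mul_eq_univ_of_le_map_frattini hN <| by
    rw [← normal_mul, htop, coe_top]

theorem frattini_inf_le_map_frattini_of_isComplement' (hD : L.IsComplement' D)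
    (hLn : ∀ H ≤ L, H.Normal) : frattini G ⊓ L ≤ (frattini L).map L.subtype := by
  rintro l ⟨hlΦ, hl⟩
  refine ⟨⟨l, hl⟩, mem_frattini_iff.mpr fun M hM => ?_, rfl⟩
  have := hLn (M.map L.subtype) (map_subtype_le _)
  have hinf : (M.map L.subtype ⊔ D) ⊓ L = M.map L.subtype := SetLike.coe_injective <| by
    rw [coe_inf, normal_mul, ← mul_inf_assoc _ _ _ (map_subtype_le M), hD.symm.disjoint.eq_bot,
      coe_bot, Set.singleton_one, mul_one]
  have hne : M.map L.subtype ⊔ D ≠ ⊤ := by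
    intro htop
    rw [htop, top_inf_eq] at hinf
    exact hM.1 <| map_injective L.subtype_injective <| by
      rw [← hinf, ← MonoidHom.range_eq_map, range_subtype]
  obtain ⟨C, hC, hle⟩ := (eq_top_or_exists_le_coatom _).resolve_left hne
  have hMC : M ≤ C.subgroupOf L := map_le_iff_le_comap.mp (le_sup_left.trans hle)
  have hCL : C.subgroupOf L ≠ ⊤ := fun h => hC.1 <| top_le_iff.mp <|
    hD.sup_eq_top ▸ sup_le (subgroupOf_eq_top.mp h) (le_sup_right.trans hle)
  rw [← (hM.le_iff_eq hCL).mp hMC]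
  exact mem_frattini_iff.mp hlΦ C hC

theorem frattini_eq_sup_of_isComplement' (hD : L.IsComplement' D) (hLn : ∀ H ≤ L, H.Normal)
    (hcent : (frattini D).map D.subtype ≤ centralizer (L : Set G)) :
    frattini G = (frattini L).map L.subtype ⊔ (frattini D).map D.subtype := by
  have := hLn L le_rfl
  have := hLn ((frattini L).map L.subtype) (map_subtype_le _)
  have := normal_map_subtype_of_le_centralizer hD.sup_eq_top hcent
  have hΦD : (frattini D).map D.subtype ≤ frattini G := le_frattini_of_le_map_frattini le_rfl
  refine le_antisymm (fun x hx => ?_) (sup_le (le_frattini_of_le_map_frattini le_rfl) hΦD)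
  obtain ⟨l, hl, d, hd, rfl⟩ :=
    mem_sup_of_normal_left.mp (frattini_le_sup_map_frattini_of_isComplement' hD hx)
  have hlΦ : l ∈ frattini G := (mul_mem_cancel_right (hΦD hd)).mp hx
  exact mul_mem_sup (frattini_inf_le_map_frattini_of_isComplement' hD hLn ⟨hlΦ, hl⟩) hd

/-- A subgroup `Q` of `Φ(D)` has only `G` as a supplement, so its SS-permutability in `G` is
S-permutability. If `Q` is a `q`-group, it therefore lies in every Sylow `q`-subgroup of `G`, and
their intersection meets `L` trivially. -/
theorem IsSSTGroup.map_frattini_le_centralizer [Group.IsSolvable G] (hG : IsSSTGroup G)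
    [Group.IsNilpotent D] (hL : IsNilpotentResidual L) (hD : L.IsComplement' D) :
    (frattini D).map D.subtype ≤ centralizer (L : Set G) := by
  have := hL.1
  refine le_of_forall_isPGroup_le fun q _ Q hQΦ hQ => ?_
  rcases eq_or_ne Q ⊥ with rfl | hne
  · exact bot_le
  have hQD : Q ≤ D := hQΦ.trans (map_subtype_le _)
  have hqL : ¬ q ∣ Nat.card L := fun h => hL.not_dvd_index_of_dvd_card hG h <|
    hD.symm.index_eq_card ▸ prime_dvd_card_of_isPGroup_of_le hQ hne hQD
  obtain ⟨K, hK⟩ := hG Q D hQD (.of_isNilpotent _)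
    (.of_isComplement' hD fun _ => hL.normal_of_le hG)
  obtain rfl := eq_top_of_mul_eq_univ_of_le_map_frattini hQΦ hK.1
  let S : Sylow q G := default
  have hS (g : G) : Q ≤ (g • S : Sylow q G) :=
    isPGroup_le_sylow_of_mul_comm hQ _ (isSSSupplement_top_iff.mp hK q _)
  have hQcore : Q ≤ (S : Subgroup G).normalCore := fun x hx g => by
    have hxg : x ∈ MulAut.conj g⁻¹ • (S : Subgroup G) := hS g⁻¹ hx
    rwa [mem_pointwise_smul_iff_inv_smul_mem, ← map_inv, inv_inv] at hxg
  have hdisj : Disjoint (S : Subgroup G).normalCore L := by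
    obtain ⟨n, hn⟩ := IsPGroup.iff_card.mp S.2
    have hcop : (Nat.card S).Coprime (Nat.card L) :=
      hn ▸ ((Fact.out : q.Prime).coprime_iff_not_dvd.mpr hqL).pow_left n
    exact (disjoint_of_coprime_natCard hcop).mono_left (normalCore_le _)
  exact fun x hx => mem_centralizer_iff.mpr fun y hy =>
    (commute_of_normal_of_disjoint _ L inferInstance inferInstance hdisj x y (hQcore hx) hy).eq.symm

end Frattini

section Complemented

/-- A complemented group: every subgroup has a complement, not necessarily normal. -/
def IsComplementedGroup (G : Type*) [Group G] : Prop :=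
  ∀ H : Subgroup G, ∃ K : Subgroup G, H.IsComplement' K

variable {G : Type*} [Group G] {L D : Subgroup G}

theorem isComplement'_map_of_ker_le {G' : Type*} [Group G'] {f : G →* G'}
    (hf : Function.Surjective f) [L.Normal] (hD : L.IsComplement' D)
    (hker : f.ker ≤ (f.ker ⊓ L) ⊔ (f.ker ⊓ D)) : (L.map f).IsComplement' (D.map f) := by
  refine isComplement'_of_disjoint_and_mul_eq_univ (disjoint_def.mpr ?_) ?_
  · rintro _ ⟨l, hl, rfl⟩ ⟨d, hd, hdl⟩
    have hld : l * d⁻¹ ∈ f.ker := by rw [MonoidHom.mem_ker, map_mul, map_inv, hdl, mul_inv_cancel]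
    obtain ⟨m, ⟨hmf, hm⟩, c, ⟨-, hc⟩, hmc⟩ := mem_sup_of_normal_left.mp (hker hld)
    have hml : m = l := congrArg (fun x => (x.1 : G)) <|
      hD.1 (a₁ := (⟨m, hm⟩, ⟨c, hc⟩)) (a₂ := (⟨l, hl⟩, ⟨d⁻¹, D.inv_mem hd⟩)) hmc
    exact hml ▸ hmf
  · rw [coe_map, coe_map, ← Set.image_mul, hD.mul_eq, Set.image_univ, hf.range_eq]

theorem normal_of_le_map_of_forall_normal {G' : Type*} [Group G'] {f : G →* G'}
    (hf : Function.Surjective f) (hLn : ∀ H ≤ L, H.Normal) {H : Subgroup G'} (hH : H ≤ L.map f) :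
    H.Normal := by
  have hrange : H ≤ (f.comp L.subtype).range := by
    rwa [MonoidHom.range_comp, range_subtype]
  rw [← map_comap_eq_self hrange, ← map_map]
  exact (hLn _ (map_subtype_le _)).map f hf

theorem exists_mul_eq_univ_of_isNilpotent [Finite G] [Group.IsNilpotent G] (A : Subgroup G) :
    ∃ B : Subgroup G, (A : Set G) * (B : Set G) = Set.univ ∧ A ⊓ B ≤ frattini G := by
  obtain ⟨B, hAB, hmin⟩ := (Set.toFinite
    {B : Subgroup G | (A : Set G) * (B : Set G) = Set.univ}).exists_minimal
    ⟨⊤, by rw [Set.mem_ofPred, coe_top, Set.mul_univ ⟨1, A.one_mem⟩]⟩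
  refine ⟨B, hAB, fun y hy => mem_frattini_iff.mpr fun M hM => ?_⟩
  by_contra hyM
  have : M.Normal :=
    NormalizerCondition.normal_of_coatom M Group.normalizerCondition_of_isNilpotent hM
  have htop : (A ⊓ B) ⊔ M = ⊤ := hM.2 _ (right_lt_sup.mpr fun h => hyM (h hy))
  have hABM : (A : Set G) * ((B ⊓ M : Subgroup G) : Set G) = Set.univ := by
    refine Set.eq_univ_of_forall fun x => ?_
    obtain ⟨a, ha, b, hb, rfl⟩ := hAB.ge (Set.mem_univ x)
    obtain ⟨c, hc, m, hm, rfl⟩ := mem_sup_of_normal_right.mp (htop ▸ mem_top b)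
    exact ⟨a * c, A.mul_mem ha hc.1, m, ⟨(B.mul_mem_cancel_left hc.2).mp hb, hm⟩, mul_assoc _ _ _⟩
  exact hyM (hmin hABM inf_le_left hy.2).2

namespace IsComplementedGroup

theorem of_isNilpotent_of_frattini_le_ker [Finite G] [Group.IsNilpotent G] {G' : Type*} [Group G']
    {f : G →* G'} (hf : Function.Surjective f) (hker : frattini G ≤ f.ker) :
    IsComplementedGroup G' := fun H => by
  obtain ⟨B, hB, hHB⟩ := exists_mul_eq_univ_of_isNilpotent (H.comap f)
  refine ⟨B.map f, isComplement'_of_disjoint_and_mul_eq_univ (disjoint_def.mpr ?_) ?_⟩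
  · rintro _ hH ⟨b, hb, rfl⟩
    exact hker (hHB ⟨hH, hb⟩)
  · rw [← map_comap_eq_self_of_surjective hf H, coe_map, coe_map, ← Set.image_mul, hB,
      Set.image_univ, hf.range_eq]

theorem of_isComplement' (hD : L.IsComplement' D) (hLn : ∀ H ≤ L, H.Normal)
    (hLc : IsComplementedGroup L) (hDc : IsComplementedGroup D) : IsComplementedGroup G := by
  intro H
  have := hLn L le_rfl
  obtain ⟨B, hB⟩ := hLc (H.subgroupOf L)
  obtain ⟨C, hC⟩ := hDc ((H ⊔ L).subgroupOf D)
  have := hLn (B.map L.subtype) (map_subtype_le _)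
  refine ⟨B.map L.subtype ⊔ C.map D.subtype,
    isComplement'_of_disjoint_and_mul_eq_univ (disjoint_def.mpr fun {x} hxH hx => ?_) ?_⟩
  · obtain ⟨_, ⟨b, hb, rfl⟩, _, ⟨c, hc, rfl⟩, rfl⟩ := mem_sup_of_normal_left.mp hx
    have hcHL : (c : G) ∈ H ⊔ L := by
      rw [← inv_mul_cancel_left (b : G) c]
      exact mul_mem (mem_sup_right (L.inv_mem b.2)) (mem_sup_left hxH)
    obtain rfl : c = 1 := disjoint_def.mp hC.disjoint hcHL hc
    have hbH : b ∈ H.subgroupOf L := by simpa [mem_subgroupOf] using hxH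
    obtain rfl : b = 1 := disjoint_def.mp hB.disjoint hbH hb
    simp
  · refine Set.eq_univ_of_forall fun x => ?_
    obtain ⟨l, hl, d, hd, rfl : l * d = x⟩ := hD.mul_eq.ge (Set.mem_univ x)
    obtain ⟨d', hd', c, hc, hdc⟩ := hC.mul_eq.ge (Set.mem_univ ⟨d, hd⟩)
    obtain ⟨h, hh, l', hl', hhl : h * l' = l * d'⟩ :=
      mem_sup_of_normal_right.mp (mul_mem (mem_sup_right hl) hd')
    obtain ⟨a, ha, b, hb, hab⟩ := hB.mul_eq.ge (Set.mem_univ ⟨l', hl'⟩)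
    have hdc : (d' * c : G) = d := congrArg Subtype.val hdc
    have hab : (a * b : G) = l' := congrArg Subtype.val hab
    refine ⟨h * a, H.mul_mem hh ha, b * c,
      mul_mem_sup (mem_map_of_mem L.subtype hb) (mem_map_of_mem D.subtype hc), ?_⟩
    calc h * a * (b * c) = h * (a * b) * c := by group
      _ = l * d := by rw [hab, hhl, mul_assoc, hdc]

theorem quotient_frattini_of_isComplement' [Finite G] [Group.IsNilpotent L] [Group.IsNilpotent D]
    (hD : L.IsComplement' D) (hLn : ∀ H ≤ L, H.Normal)
    (hΦ : frattini G = (frattini L).map L.subtype ⊔ (frattini D).map D.subtype) :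
    IsComplementedGroup (G ⧸ frattini G) := by
  have := hLn L le_rfl
  let f := QuotientGroup.mk' (frattini G)
  have hf : Function.Surjective f := QuotientGroup.mk'_surjective _
  have hker : f.ker = (frattini L).map L.subtype ⊔ (frattini D).map D.subtype :=
    (QuotientGroup.ker_mk' _).trans hΦ
  have hLf : (frattini L).map L.subtype ≤ f.ker := hker ▸ le_sup_left
  have hDf : (frattini D).map D.subtype ≤ f.ker := hker ▸ le_sup_right
  have hcompl : (L.map f).IsComplement' (D.map f) := isComplement'_map_of_ker_le hf hD <|
    hker.le.trans (sup_le_sup (le_inf hLf (map_subtype_le _)) (le_inf hDf (map_subtype_le _)))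
  exact of_isComplement' hcompl (fun _ => normal_of_le_map_of_forall_normal hf hLn)
    (of_isNilpotent_of_frattini_le_ker (f.subgroupMap_surjective L) fun _ hx =>
      Subtype.ext (hLf (mem_map_of_mem _ hx)))
    (of_isNilpotent_of_frattini_le_ker (f.subgroupMap_surjective D) fun _ hx =>
      Subtype.ext (hDf (mem_map_of_mem _ hx)))

end IsComplementedGroup

end Complemented

/-- Theorem E. -/
theorem theoremE {G : Type*} [Group G] [Finite G]
    (hsol : IsSolvable G) (hsst : IsSSTGroup G)
    (L D : Subgroup G) (hL : IsNilpotentResidual L) (hD : L.IsComplement' D) :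
    frattini G = (frattini L).map L.subtype ⊔ (frattini D).map D.subtype ∧
      ∀ H : Subgroup (G ⧸ frattini G), ∃ K : Subgroup (G ⧸ frattini G),
        H.IsComplement' K := by
  have : Group.IsSolvable G := hsol
  have := hL.1
  have := hL.2.1
  have : Group.IsNilpotent L := hL.isNilpotent hsst
  have : Group.IsNilpotent D := Group.nilpotent_of_mulEquiv hD.symm.QuotientMulEquiv
  have hLn : ∀ H ≤ L, H.Normal := fun _ => hL.normal_of_le hsst
  have hΦ := frattini_eq_sup_of_isComplement' hD hLn (hsst.map_frattini_le_centralizer hL hD)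
  exact ⟨hΦ, IsComplementedGroup.quotient_frattini_of_isComplement' hD hLn hΦ⟩
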